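/- For each integer i ≥ 0 and real x > 0, the function y ↦ g_i(y) − g_i(x+y) is nonincreasing on (0, ∞), where g_i(y) = yk·C(1/(2^i y), r) and C(·,r) is the extended binomial coefficient. -/

import Mathlib

/-- The extended binomial coefficient: `z(z-1)⋯(z-r+1)/r!` when `z ≥ r-1`, and `0` otherwise. -/
noncomputable def extBinom (z : ℝ) (r : ℕ) : ℝ :=
  if (r : ℝ) - 1 ≤ z then (∏ j ∈ Finset.range r, (z - (j : ℝ))) / (Nat.factorial r) else 0

/-- `g_i(y) = y k C(1/(2^i y), r)` -/
noncomputable def gi (k r i : ℕ) (y : ℝ) : ℝ :=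
  y * (k : ℝ) * extBinom (1 / (2 ^ i * y)) r

/-!
For `r ≥ 1` the function `t ↦ C(t, r)` vanishes up to `r - 1` and is increasing and convex from
there on, so it is convex; for `r = 0` it is constant on `[0, ∞)`. Hence its perspective
`(y, t) ↦ y C(t / y, r)` is convex on `y > 0`, `t ≥ 0`. Up to the factor `k`, the function `g_i` is
the restriction of this perspective to the line `t = 2⁻ⁱ`, so it is convex on `(0, ∞)`, and the
increments of a convex function over intervals of a fixed length are nondecreasing.
-/

open Set

/-- The perspective `(t, x) ↦ t f(x / t)` of `f`, with the scaling variable `t` as the first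
coordinate. It is meant for `t > 0`; in a module its value at `t = 0` is `0`. -/
def perspective {𝕜 E β : Type*} [Inv 𝕜] [SMul 𝕜 E] [SMul 𝕜 β] (f : E → β) (p : 𝕜 × E) : β :=
  p.1 • f (p.1⁻¹ • p.2)

section Perspective

variable {𝕜 E β : Type*} [Field 𝕜] [AddCommGroup E] [Module 𝕜 E]

theorem inv_smul_combo_eq_combo_inv_smul {t₁ t₂ : 𝕜} (ht₁ : t₁ ≠ 0) (ht₂ : t₂ ≠ 0) (a b : 𝕜)
    (x₁ x₂ : E) :
    (a * t₁ + b * t₂)⁻¹ • (a • x₁ + b • x₂) =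
      (a * t₁ / (a * t₁ + b * t₂)) • t₁⁻¹ • x₁ + (b * t₂ / (a * t₁ + b * t₂)) • t₂⁻¹ • x₂ := by
  match_scalars <;> field_simp

variable [LinearOrder 𝕜] [IsStrictOrderedRing 𝕜] {s : Set E}

theorem convex_setOf_pos_and_inv_smul_mem (hs : Convex 𝕜 s) :
    Convex 𝕜 {p : 𝕜 × E | 0 < p.1 ∧ p.1⁻¹ • p.2 ∈ s} := by
  rintro ⟨t₁, x₁⟩ ⟨ht₁ : 0 < t₁, hx₁⟩ ⟨t₂, x₂⟩ ⟨ht₂ : 0 < t₂, hx₂⟩ a b ha hb hab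
  have hT : 0 < a * t₁ + b * t₂ := convex_Ioi (0 : 𝕜) ht₁ ht₂ ha hb hab
  refine ⟨hT, ?_⟩
  change (a * t₁ + b * t₂)⁻¹ • (a • x₁ + b • x₂) ∈ s
  rw [inv_smul_combo_eq_combo_inv_smul ht₁.ne' ht₂.ne']
  exact hs hx₁ hx₂ (by positivity) (by positivity) (by rw [← add_div, div_self hT.ne'])

theorem convexOn_perspective [AddCommMonoid β] [PartialOrder β] [Module 𝕜 β] [PosSMulMono 𝕜 β]
    {f : E → β} (hf : ConvexOn 𝕜 s f) :
    ConvexOn 𝕜 {p : 𝕜 × E | 0 < p.1 ∧ p.1⁻¹ • p.2 ∈ s} (perspective f) := by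
  refine ⟨convex_setOf_pos_and_inv_smul_mem hf.1, ?_⟩
  rintro ⟨t₁, x₁⟩ ⟨ht₁ : 0 < t₁, hx₁⟩ ⟨t₂, x₂⟩ ⟨ht₂ : 0 < t₂, hx₂⟩ a b ha hb hab
  change (a * t₁ + b * t₂) • f ((a * t₁ + b * t₂)⁻¹ • (a • x₁ + b • x₂)) ≤
    a • t₁ • f (t₁⁻¹ • x₁) + b • t₂ • f (t₂⁻¹ • x₂)
  rw [inv_smul_combo_eq_combo_inv_smul ht₁.ne' ht₂.ne']
  have hT : 0 < a * t₁ + b * t₂ := convex_Ioi (0 : 𝕜) ht₁ ht₂ ha hb hab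
  have hweights : a * t₁ / (a * t₁ + b * t₂) + b * t₂ / (a * t₁ + b * t₂) = 1 := by
    rw [← add_div, div_self hT.ne']
  set T := a * t₁ + b * t₂
  calc T • f ((a * t₁ / T) • t₁⁻¹ • x₁ + (b * t₂ / T) • t₂⁻¹ • x₂)
      ≤ T • ((a * t₁ / T) • f (t₁⁻¹ • x₁) + (b * t₂ / T) • f (t₂⁻¹ • x₂)) :=
        smul_le_smul_of_nonneg_left (hf.2 hx₁ hx₂ (by positivity) (by positivity) hweights) hT.le
    _ = a • t₁ • f (t₁⁻¹ • x₁) + b • t₂ • f (t₂⁻¹ • x₂) := by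
        simp only [smul_add, smul_smul, mul_div_cancel₀ _ hT.ne']

end Perspective

theorem map_add_map_le_of_mem_segment {𝕜 E β : Type*} [CommRing 𝕜] [PartialOrder 𝕜]
    [AddCommGroup E] [Module 𝕜 E] [AddCommMonoid β] [PartialOrder β] [IsOrderedAddMonoid β]
    [Module 𝕜 β] {s : Set E} {f : E → β} (hf : ConvexOn 𝕜 s f) {w x y z : E}
    (hw : w ∈ s) (hz : z ∈ s) (hx : x ∈ segment 𝕜 w z) (hxy : x + y = w + z) :
    f x + f y ≤ f w + f z := by
  obtain ⟨a, b, ha, hb, hab, rfl⟩ := hx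
  have hba : b + a = 1 := by rw [add_comm, hab]
  obtain rfl : y = b • w + a • z := by
    obtain rfl : a = 1 - b := eq_sub_of_add_eq hab
    rw [eq_sub_of_add_eq' hxy]
    module
  calc f (a • w + b • z) + f (b • w + a • z)
      ≤ (a • f w + b • f z) + (b • f w + a • f z) :=
        add_le_add (hf.2 hw hz ha hb hab) (hf.2 hw hz hb ha hba)
    _ = (a + b) • f w + (b + a) • f z := by module
    _ = f w + f z := by rw [hab, hba, one_smul, one_smul]

theorem antitoneOn_sub_add_left_of_convexOn {𝕜 β : Type*} [Field 𝕜] [LinearOrder 𝕜]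
    [IsStrictOrderedRing 𝕜] [AddCommGroup β] [PartialOrder β] [IsOrderedAddMonoid β] [Module 𝕜 β]
    {s : Set 𝕜} {f : 𝕜 → β} (hf : ConvexOn 𝕜 s f) {x : 𝕜} (hx : 0 ≤ x) :
    AntitoneOn (fun y => f y - f (x + y)) {y ∈ s | x + y ∈ s} := by
  rintro y₁ ⟨hy₁, -⟩ y₂ ⟨-, hy₂⟩ hy
  have hmem : y₂ ∈ segment 𝕜 y₁ (x + y₂) := by
    rw [segment_eq_Icc (by linarith)]
    exact ⟨hy, by linarith⟩
  have hle : f y₂ + f (x + y₁) ≤ f y₁ + f (x + y₂) :=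
    map_add_map_le_of_mem_segment hf hy₁ hy₂ hmem (by ring)
  exact sub_le_sub_iff.2 hle

theorem extBinom_eq_piecewise_descPochhammer (r : ℕ) :
    (fun z => extBinom z r) =
      (r.factorial : ℝ)⁻¹ • (Ici (r - 1 : ℝ)).piecewise (descPochhammer ℝ r).eval 0 := by
  ext z
  simp only [extBinom, Pi.smul_apply, piecewise, mem_Ici, descPochhammer_eval_eq_prod_range,
    smul_eq_mul]
  split_ifs <;> simp [div_eq_inv_mul]

theorem convexOn_univ_extBinom {r : ℕ} (hr : r ≠ 0) :
    ConvexOn ℝ univ fun z => extBinom z r := by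
  rw [extBinom_eq_piecewise_descPochhammer]
  have hzero : (descPochhammer ℝ r).eval (r - 1 : ℝ) = 0 := by
    rw [← Nat.cast_pred hr.pos]
    exact descPochhammer_eval_coe_nat_of_lt (Nat.sub_one_lt hr)
  exact (convexOn_univ_piecewise_Ici_of_monotoneOn_Ici_antitoneOn_Iic
    (convexOn_descPochhammer_eval r) (convexOn_const 0 (convex_Iic _))
    (monotoneOn_descPochhammer_eval r) antitoneOn_const hzero).smul (by positivity)

/- For `r = 0` convexity fails on the whole line, since `extBinom · 0` jumps from `0` to `1`
at `-1`. -/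
theorem convexOn_Ici_extBinom (r : ℕ) : ConvexOn ℝ (Ici 0) fun z => extBinom z r := by
  rcases eq_or_ne r 0 with rfl | hr
  · refine (convexOn_const 1 (convex_Ici 0)).congr fun z (hz : 0 ≤ z) => ?_
    have hz' : -1 ≤ z := by linarith
    simp [extBinom, hz']
  · exact (convexOn_univ_extBinom hr).subset (subset_univ _) (convex_Ici 0)

theorem gi_eq_mul_perspective_extBinom (k r i : ℕ) (y : ℝ) :
    gi k r i y = k * perspective (fun z => extBinom z r) (y, ((2 : ℝ) ^ i)⁻¹) := by
  simp only [gi, perspective, smul_eq_mul, one_div, mul_inv_rev]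
  ring

theorem convexOn_gi (k r i : ℕ) : ConvexOn ℝ (Ioi 0) (gi k r i) := by
  let line : ℝ →ᵃ[ℝ] ℝ × ℝ := (AffineMap.id ℝ ℝ).prod (AffineMap.const ℝ ℝ (2 ^ i)⁻¹)
  have hline : Ioi 0 ⊆ line ⁻¹' {p | 0 < p.1 ∧ p.1⁻¹ • p.2 ∈ Ici 0} := fun y (hy : 0 < y) =>
    ⟨hy, show 0 ≤ y⁻¹ * (2 ^ i)⁻¹ by positivity⟩
  have hconv := ((convexOn_perspective (convexOn_Ici_extBinom r)).comp_affineMap line).subset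
    hline (convex_Ioi 0)
  exact (hconv.smul (Nat.cast_nonneg (α := ℝ) k)).congr fun y _ =>
    (gi_eq_mul_perspective_extBinom k r i y).symm

theorem gi_diff_antitone_general (k r i : ℕ) {x : ℝ} (hx : 0 ≤ x) :
    AntitoneOn (fun y => gi k r i y - gi k r i (x + y)) (Ioi 0) :=
  (antitoneOn_sub_add_left_of_convexOn (convexOn_gi k r i) hx).mono
    fun _ hy => ⟨hy, add_pos_of_nonneg_of_pos hx hy⟩

theorem gi_diff_antitone (k r i : ℕ) (hr : 3 ≤ r) (hk : r ≤ k) (x : ℝ) (hx : 0 < x) :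
    ∀ y₁ y₂ : ℝ, 0 < y₁ → y₁ ≤ y₂ →
      gi k r i y₂ - gi k r i (x + y₂) ≤ gi k r i y₁ - gi k r i (x + y₁) :=
  fun _ _ hy₁ hy => gi_diff_antitone_general k r i hx.le hy₁ (hy₁.trans_le hy) hy
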